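/- Let F : ℝ^m → ℝ be L-smooth and set L' = L + 1. Let (z_k) be generated by z_{k+1} = z_k + t_k s_k with t_k > 0, where ‖g_k − ∇F(z_k)‖₂ ≤ δ_k, c₁‖g_k‖₂² ≤ −g_kᵀ s_k, and ‖s_k‖₂ ≤ c₂‖g_k‖₂ with c₁, c₂ > 0. Suppose there exists β ∈ [0, c₁/(c₂√L')) such that δ_k ≤ β‖g_k‖₂ for all k. Define Δ = c₁² − L' c₂² β², t̄₁ = (c₁ − √Δ)/(c₂² L'), t̄₂ = (c₁ + √Δ)/(c₂² L'). Then for every k, F(z_{k+1}) ≤ F(z_k) − (c₂² L'/2)(t_k − t̄₁)(t̄₂ − t_k)‖g_k‖₂². -/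

import Mathlib

open scoped RealInnerProductSpace

/-!
Along a step `t • s` of an `L`-smooth function, the Taylor bound with remainder
`L / 2 * ‖t • s‖ ^ 2` holds. Replacing the gradient by `g` costs at most `t * (β * ‖g‖) * ‖s‖`, and
Young's inequality splits this cost into `β ^ 2 / 2 * ‖g‖ ^ 2` and `1 / 2 * ‖t • s‖ ^ 2`; the latter
turns `L` into `L + 1`. The resulting decrease is a concave quadratic in `t` with roots `t₁` and
`t₂`, and the bound on `β` makes its discriminant nonnegative.
-/

theorem le_add_mul_add_of_deriv_le_affine {φ φ' : ℝ → ℝ} {a b p q : ℝ} (hab : a ≤ b)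
    (hφ : ∀ r ∈ Set.Icc a b, HasDerivWithinAt φ (φ' r) (Set.Icc a b) r)
    (hφ' : ∀ r ∈ Set.Ico a b, φ' r ≤ p + q * (r - a)) :
    φ b ≤ φ a + p * (b - a) + q / 2 * (b - a) ^ 2 := by
  have hquad (r : ℝ) : HasDerivAt (fun r ↦ φ a + p * (r - a) + q / 2 * (r - a) ^ 2)
      (p + q * (r - a)) r := by
    have hsub : HasDerivAt (fun r ↦ r - a) 1 r := (hasDerivAt_id r).sub_const a
    refine (((hsub.const_mul p).const_add (φ a)).add
      ((hsub.pow 2).const_mul (q / 2))).congr_deriv ?_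
    norm_num
    ring
  exact image_le_of_deriv_right_le_deriv_boundary
    (fun r hr ↦ (hφ r hr).continuousWithinAt)
    (fun r hr ↦ (hφ r (Set.Ico_subset_Icc_self hr)).mono_of_mem_nhdsWithin
      (Icc_mem_nhdsGE_of_mem hr))
    (by simp) (fun r _ ↦ (hquad r).continuousAt.continuousWithinAt)
    (fun r _ ↦ (hquad r).hasDerivWithinAt) hφ' (Set.right_mem_Icc.2 hab)

open AffineMap (lineMap) in
theorem le_add_fderiv_add_of_norm_fderiv_sub_le {E : Type*} [NormedAddCommGroup E]
    [NormedSpace ℝ E] {f : E → ℝ} {f' : E → StrongDual ℝ E} {L : ℝ} {x y : E}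
    (hf : ∀ w ∈ segment ℝ x y, HasFDerivWithinAt f (f' w) (segment ℝ x y) w)
    (hL : ∀ w ∈ segment ℝ x y, ‖f' w - f' x‖ ≤ L * ‖w - x‖) :
    f y ≤ f x + f' x (y - x) + L / 2 * ‖y - x‖ ^ 2 := by
  have hmem : Set.MapsTo (lineMap x y) (Set.Icc (0 : ℝ) 1) (segment ℝ x y) := by
    rw [segment_eq_image_lineMap]
    exact Set.mapsTo_image _ _
  have hderiv : ∀ r ∈ Set.Icc (0 : ℝ) 1, HasDerivWithinAt (fun r ↦ f (lineMap x y r))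
      (f' (lineMap x y r) (y - x)) (Set.Icc 0 1) r := fun r hr ↦
    (hf _ (hmem hr)).comp_hasDerivWithinAt r AffineMap.hasDerivWithinAt_lineMap hmem
  have hslope : ∀ r ∈ Set.Ico (0 : ℝ) 1,
      f' (lineMap x y r) (y - x) ≤ f' x (y - x) + L * ‖y - x‖ ^ 2 * (r - 0) := by
    intro r hr
    have hnorm : ‖(lineMap x y r : E) - x‖ = r * ‖y - x‖ := by
      rw [← dist_eq_norm, dist_lineMap_left, Real.norm_of_nonneg hr.1, dist_comm, dist_eq_norm]
    rw [← sub_le_iff_le_add']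
    calc f' (lineMap x y r) (y - x) - f' x (y - x)
        ≤ ‖(f' (lineMap x y r) - f' x) (y - x)‖ := Real.le_norm_self _
      _ ≤ L * ‖(lineMap x y r : E) - x‖ * ‖y - x‖ :=
        ContinuousLinearMap.le_of_opNorm_le _ (hL _ (hmem (Set.Ico_subset_Icc_self hr))) _
      _ = L * ‖y - x‖ ^ 2 * (r - 0) := by rw [hnorm]; ring
  have htaylor := le_add_mul_add_of_deriv_le_affine zero_le_one hderiv hslope
  simpa [mul_div_right_comm] using htaylor

theorem mul_sub_div_mul_div_sub {K : Type*} [Field K] {a b c d : K} (ha : a ≠ 0)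
    (hd : d ^ 2 = b ^ 2 - a * c) (t : K) :
    a * (t - (b - d) / a) * ((b + d) / a - t) = 2 * b * t - c - a * t ^ 2 := by
  field_simp
  linear_combination hd

theorem pos_of_lt_div_mul_sqrt {a b c x : ℝ} (hb : 0 ≤ b) (h : b < a / (c * √x)) : 0 < x := by
  by_contra! hx
  -- For `x ≤ 0` both `√x` and the quotient take the junk value `0`.
  rw [Real.sqrt_eq_zero_of_nonpos hx, mul_zero, div_zero] at h
  exact h.not_ge hb

theorem mul_sq_mul_sq_le_sq_of_le_div_mul_sqrt {a b c x : ℝ} (hb : 0 ≤ b) (hc : 0 < c) (hx : 0 < x)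
    (h : b ≤ a / (c * √x)) : x * c ^ 2 * b ^ 2 ≤ a ^ 2 := by
  have hle : b * (c * √x) ≤ a := (le_div_iff₀ (by positivity)).1 h
  calc x * c ^ 2 * b ^ 2 = (b * (c * √x)) ^ 2 := by rw [mul_pow, mul_pow, Real.sq_sqrt hx.le]; ring
    _ ≤ a ^ 2 := by gcongr

section InnerProductSpace

variable {E : Type*} [NormedAddCommGroup E] [InnerProductSpace ℝ E]

theorem inner_le_inner_add_of_norm_sub_le {u v w : E} {ε : ℝ} (h : ‖u - v‖ ≤ ε) :
    ⟪v, w⟫ ≤ ⟪u, w⟫ + ε * ‖w‖ := by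
  rw [← sub_le_iff_le_add', ← inner_sub_left]
  calc ⟪v - u, w⟫ ≤ ‖v - u‖ * ‖w‖ := real_inner_le_norm _ _
    _ ≤ ε * ‖w‖ := by rw [norm_sub_rev]; gcongr

variable [CompleteSpace E] {F : E → ℝ} {L c₁ c₂ β t : ℝ} {x s g : E}

theorem le_add_inner_gradient_add_of_norm_gradient_sub_le {y : E}
    (hF : ∀ w ∈ segment ℝ x y, DifferentiableAt ℝ F w)
    (hL : ∀ w ∈ segment ℝ x y, ‖gradient F w - gradient F x‖ ≤ L * ‖w - x‖) :
    F y ≤ F x + ⟪gradient F x, y - x⟫ + L / 2 * ‖y - x‖ ^ 2 := by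
  rw [inner_gradient_left]
  refine le_add_fderiv_add_of_norm_fderiv_sub_le
    (fun w hw ↦ (hF w hw).hasFDerivAt.hasFDerivWithinAt) fun w hw ↦ ?_
  rw [← toDual_gradient, ← toDual_gradient, ← map_sub, LinearIsometryEquiv.norm_map]
  exact hL w hw

theorem inexact_descent_step_le_quadratic (hL0 : 0 ≤ L + 1)
    (hF : ∀ w ∈ segment ℝ x (x + t • s), DifferentiableAt ℝ F w)
    (hL : ∀ w ∈ segment ℝ x (x + t • s), ‖gradient F w - gradient F x‖ ≤ L * ‖w - x‖)
    (ht : 0 ≤ t) (herr : ‖g - gradient F x‖ ≤ β * ‖g‖)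
    (hdesc : c₁ * ‖g‖ ^ 2 ≤ -⟪g, s⟫) (hbnd : ‖s‖ ≤ c₂ * ‖g‖) :
    F (x + t • s) ≤
      F x - (2 * c₁ * t - β ^ 2 - c₂ ^ 2 * (L + 1) * t ^ 2) / 2 * ‖g‖ ^ 2 := by
  have htaylor : F (x + t • s) ≤ F x + t * ⟪gradient F x, s⟫ + L / 2 * (t * ‖s‖) ^ 2 := by
    simpa only [add_sub_cancel_left, real_inner_smul_right, norm_smul, Real.norm_of_nonneg ht]
      using le_add_inner_gradient_add_of_norm_gradient_sub_le hF hL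
  have hslope : ⟪gradient F x, s⟫ ≤ -(c₁ * ‖g‖ ^ 2) + β * ‖g‖ * ‖s‖ :=
    (inner_le_inner_add_of_norm_sub_le herr).trans (by gcongr; linarith)
  have hyoung : 2 * (β * ‖g‖) * (t * ‖s‖) ≤ (β * ‖g‖) ^ 2 + (t * ‖s‖) ^ 2 :=
    two_mul_le_add_sq _ _
  calc F (x + t • s)
      ≤ F x + t * (-(c₁ * ‖g‖ ^ 2) + β * ‖g‖ * ‖s‖) + L / 2 * (t * ‖s‖) ^ 2 :=
        htaylor.trans (by gcongr)
    _ ≤ F x - c₁ * t * ‖g‖ ^ 2 + β ^ 2 / 2 * ‖g‖ ^ 2 + (L + 1) / 2 * (t * ‖s‖) ^ 2 := by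
        linarith
    _ ≤ F x - c₁ * t * ‖g‖ ^ 2 + β ^ 2 / 2 * ‖g‖ ^ 2 + (L + 1) / 2 * (t * (c₂ * ‖g‖)) ^ 2 := by
        gcongr
    _ = F x - (2 * c₁ * t - β ^ 2 - c₂ ^ 2 * (L + 1) * t ^ 2) / 2 * ‖g‖ ^ 2 := by ring

theorem stmt_3_general {L' Δ t₁ t₂ : ℝ} (hL' : L' = L + 1)
    (hF : ∀ w ∈ segment ℝ x (x + t • s), DifferentiableAt ℝ F w)
    (hL : ∀ w ∈ segment ℝ x (x + t • s), ‖gradient F w - gradient F x‖ ≤ L * ‖w - x‖)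
    (hc₂ : 0 < c₂) (ht : 0 ≤ t) (herr : ‖g - gradient F x‖ ≤ β * ‖g‖)
    (hdesc : c₁ * ‖g‖ ^ 2 ≤ -⟪g, s⟫) (hbnd : ‖s‖ ≤ c₂ * ‖g‖)
    (hβ0 : 0 ≤ β) (hβ1 : β < c₁ / (c₂ * √L'))
    (hΔ : Δ = c₁ ^ 2 - L' * c₂ ^ 2 * β ^ 2)
    (ht₁ : t₁ = (c₁ - √Δ) / (c₂ ^ 2 * L')) (ht₂ : t₂ = (c₁ + √Δ) / (c₂ ^ 2 * L')) :
    F (x + t • s) ≤ F x - (c₂ ^ 2 * L' / 2) * (t - t₁) * (t₂ - t) * ‖g‖ ^ 2 := by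
  have hL'pos : 0 < L' := pos_of_lt_div_mul_sqrt hβ0 hβ1
  have hΔ0 : 0 ≤ Δ :=
    hΔ ▸ sub_nonneg.2 (mul_sq_mul_sq_le_sq_of_le_div_mul_sqrt hβ0 hc₂ hL'pos hβ1.le)
  have hsqrt : √Δ ^ 2 = c₁ ^ 2 - c₂ ^ 2 * L' * β ^ 2 := by
    rw [Real.sq_sqrt hΔ0, hΔ, mul_comm L']
  have hfactor : c₂ ^ 2 * L' * (t - t₁) * (t₂ - t)
      = 2 * c₁ * t - β ^ 2 - c₂ ^ 2 * L' * t ^ 2 := by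
    rw [ht₁, ht₂]
    exact mul_sub_div_mul_div_sub (by positivity) hsqrt t
  calc F (x + t • s)
      ≤ F x - (2 * c₁ * t - β ^ 2 - c₂ ^ 2 * L' * t ^ 2) / 2 * ‖g‖ ^ 2 := by
        subst hL'
        exact inexact_descent_step_le_quadratic hL'pos.le hF hL ht herr hdesc hbnd
    _ = F x - (c₂ ^ 2 * L' / 2) * (t - t₁) * (t₂ - t) * ‖g‖ ^ 2 := by rw [← hfactor]; ring

end InnerProductSpace

/-- descent inequality under gradient-proportional error tolerances. -/
theorem stmt_3 (m : ℕ) (F : EuclideanSpace ℝ (Fin m) → ℝ) (L L' : ℝ)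
    (hdiff : Differentiable ℝ F)
    (hlip : ∀ x y : EuclideanSpace ℝ (Fin m), ‖gradient F x - gradient F y‖ ≤ L * ‖x - y‖)
    (hL' : L' = L + 1)
    (z s g : ℕ → EuclideanSpace ℝ (Fin m)) (t δ : ℕ → ℝ)
    (c₁ c₂ : ℝ) (hc₁ : 0 < c₁) (hc₂ : 0 < c₂)
    (ht : ∀ k, 0 < t k) (hδ : ∀ k, 0 ≤ δ k)
    (hupd : ∀ k, z (k + 1) = z k + t k • s k)
    (herr : ∀ k, ‖g k - gradient F (z k)‖ ≤ δ k)
    (hdesc : ∀ k, c₁ * ‖g k‖ ^ 2 ≤ -⟪g k, s k⟫)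
    (hbnd : ∀ k, ‖s k‖ ≤ c₂ * ‖g k‖)
    (β : ℝ) (hβ0 : 0 ≤ β) (hβ1 : β < c₁ / (c₂ * Real.sqrt L'))
    (hδβ : ∀ k, δ k ≤ β * ‖g k‖)
    (Δ t₁ t₂ : ℝ)
    (hΔ : Δ = c₁ ^ 2 - L' * c₂ ^ 2 * β ^ 2)
    (ht₁ : t₁ = (c₁ - Real.sqrt Δ) / (c₂ ^ 2 * L'))
    (ht₂ : t₂ = (c₁ + Real.sqrt Δ) / (c₂ ^ 2 * L')) :
    ∀ k, F (z (k + 1)) ≤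
      F (z k) - (c₂ ^ 2 * L' / 2) * (t k - t₁) * (t₂ - t k) * ‖g k‖ ^ 2 := by
  intro k
  rw [hupd k]
  exact stmt_3_general hL' (fun w _ ↦ hdiff w) (fun w _ ↦ hlip w (z k)) hc₂ (ht k).le
    ((herr k).trans (hδβ k)) (hdesc k) (hbnd k) hβ0 hβ1 hΔ ht₁ ht₂
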